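/- Assume C is an n×n matrix with all entries positive and g is an admissible weight function with 2·L⁺(g) < 1 − τ_B(C). Then f_g has a unique fixed point x* ∈ int(Σ) and for every x ∈ int(Σ) the iterates f_g^s(x) converge to x* as s → ∞. -/

import Mathlib

open Set Matrix Filter Topology

/-- An admissible weight function. -/
def IsAdmissible (g g' : ℝ → ℝ) : Prop :=
  (∀ x ∈ Set.Icc (0:ℝ) 1, HasDerivWithinAt g (g' x) (Set.Icc (0:ℝ) 1) x) ∧
  ContinuousOn g' (Set.Icc (0:ℝ) 1) ∧
  g 0 = 1 ∧
  (∀ x ∈ Set.Icc (0:ℝ) 1, 0 < g x) ∧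
  (∀ x ∈ Set.Icc (0:ℝ) 1, 0 < g' x)

/-- The set of values `g'(x)/g(x)` for `x ∈ [0,1]`; its maximum is `L⁺(g)`. -/
def ratioSet (g g' : ℝ → ℝ) : Set ℝ := (fun x => g' x / g x) '' Set.Icc (0:ℝ) 1

/-- The stochastic matrix `M_g(x)`. -/
noncomputable def Mg {n : ℕ} (C : Matrix (Fin n) (Fin n) ℝ) (g : ℝ → ℝ)
    (x : Fin n → ℝ) : Matrix (Fin n) (Fin n) ℝ :=
  Matrix.of fun i j => C i j * g (x j) / ∑ k, C i k * g (x k)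

/-- The map `f_g(x) = x · M_g(x)`. -/
noncomputable def fg {n : ℕ} (C : Matrix (Fin n) (Fin n) ℝ) (g : ℝ → ℝ)
    (x : Fin n → ℝ) : Fin n → ℝ :=
  Matrix.vecMul x (Mg C g x)

/-- Hilbert's projective metric on positive vectors. -/
noncomputable def dH {n : ℕ} (x y : Fin n → ℝ) : ℝ :=
  ⨆ i, ⨆ j, Real.log ((x i * y j) / (y i * x j))

/-- The set of contraction ratios of a matrix `A` with respect to Hilbert's
projective metric; its least upper bound is Birkhoff's coefficient of ergodicity
`τ_B(A)`. -/
def birkhoffRatios {n : ℕ} (A : Matrix (Fin n) (Fin n) ℝ) : Set ℝ :=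
  {r : ℝ | ∃ x y : Fin n → ℝ, (∀ i, 0 < x i) ∧ (∀ i, 0 < y i) ∧
    (∀ c : ℝ, x ≠ c • y) ∧
    r = dH (Matrix.vecMul x A) (Matrix.vecMul y A) / dH x y}

/-!
Write `f_g(x) = (g ∘ x) * (u ᵥ* C)` with `u = x / (C *ᵥ (g ∘ x))`, the products and quotients of
vectors being entrywise. The metric `dH` is subadditive under entrywise products and quotients, and
a nonnegative matrix does not increase it. On the simplex, `x ↦ g ∘ x` multiplies it by at most the
Lipschitz constant `L` of `log ∘ g`; monotonicity of `g` is what gives `L` rather than `2 * L`.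
Hence `f_g` contracts `dH` by the factor `L + τ * (1 + L)`. Since `dH` dominates the sup distance
on the open simplex and `f_g` maps the closed simplex into the open one, Picard iteration converges
from every point of the closed simplex.
-/

open scoped NNReal

section DominatedContraction

variable {X : Type*} [PseudoMetricSpace X] {S T : Set X} {f : X → X} {d : X → X → ℝ} {ρ : ℝ}

lemma dist_iterate_le_of_dominated (hT : MapsTo f T T) (hρ : 0 ≤ ρ)
    (hdist : ∀ x ∈ T, ∀ y ∈ T, dist x y ≤ d x y)
    (hcontr : ∀ x ∈ T, ∀ y ∈ T, d (f x) (f y) ≤ ρ * d x y)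
    {x y : X} (hx : x ∈ T) (hy : y ∈ T) (k : ℕ) :
    dist (f^[k] x) (f^[k] y) ≤ d x y * ρ ^ k := by
  have hd : d (f^[k] x) (f^[k] y) ≤ d x y * ρ ^ k := by
    induction k with
    | zero => simp
    | succ k ih =>
      rw [Function.iterate_succ_apply', Function.iterate_succ_apply']
      calc d (f (f^[k] x)) (f (f^[k] y))
          ≤ ρ * d (f^[k] x) (f^[k] y) := hcontr _ (hT.iterate k hx) _ (hT.iterate k hy)
        _ ≤ ρ * (d x y * ρ ^ k) := mul_le_mul_of_nonneg_left ih hρ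
        _ = d x y * ρ ^ (k + 1) := by ring
  exact (hdist _ (hT.iterate k hx) _ (hT.iterate k hy)).trans hd

lemma tendsto_iterate_of_dominated (hT : MapsTo f T T) (hρ : 0 ≤ ρ) (hρ1 : ρ < 1)
    (hdist : ∀ x ∈ T, ∀ y ∈ T, dist x y ≤ d x y)
    (hcontr : ∀ x ∈ T, ∀ y ∈ T, d (f x) (f y) ≤ ρ * d x y)
    {x z : X} (hx : x ∈ T) (hz : z ∈ T) (hfix : f z = z) :
    Tendsto (fun k : ℕ => f^[k] x) atTop (𝓝 z) := by
  have hlim : Tendsto (fun k : ℕ => d x z * ρ ^ k) atTop (𝓝 0) := by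
    simpa using (tendsto_pow_atTop_nhds_zero_of_lt_one hρ hρ1).const_mul (d x z)
  refine tendsto_iff_dist_tendsto_zero.2 (squeeze_zero (fun _ => dist_nonneg) (fun k => ?_) hlim)
  simpa only [Function.iterate_fixed hfix] using
    dist_iterate_le_of_dominated hT hρ hdist hcontr hx hz k

/- The limit is found in `S` by means of `dist`, and lies in `T` because it equals its own image. -/
theorem exists_attracting_fixedPoint_of_dominated [T2Space X] (hS : IsComplete S) (hne : S.Nonempty)
    (hf : ContinuousOn f S) (hST : MapsTo f S T) (hTS : T ⊆ S) (hρ : 0 ≤ ρ) (hρ1 : ρ < 1)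
    (hdist : ∀ x ∈ T, ∀ y ∈ T, dist x y ≤ d x y)
    (hcontr : ∀ x ∈ T, ∀ y ∈ T, d (f x) (f y) ≤ ρ * d x y) :
    ∃ z ∈ T, f z = z ∧ (∀ y ∈ S, f y = y → y = z) ∧
      ∀ x ∈ S, Tendsto (fun k : ℕ => f^[k] x) atTop (𝓝 z) := by
  have hSS : MapsTo f S S := fun x hx => hTS (hST hx)
  have hTT : MapsTo f T T := fun x hx => hST (hTS hx)
  obtain ⟨w, hw⟩ := hne
  have hcauchy : CauchySeq fun k : ℕ => f^[k] (f w) :=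
    cauchySeq_of_le_geometric ρ (d (f w) (f (f w))) hρ1 fun k =>
      dist_iterate_le_of_dominated hTT hρ hdist hcontr (hST hw) (hTT (hST hw)) k
  have horbit : ∀ k : ℕ, f^[k] (f w) ∈ S := fun k => hSS.iterate k (hSS hw)
  obtain ⟨z, hzS, hz⟩ := cauchySeq_tendsto_of_isComplete hS horbit hcauchy
  have hfix : f z = z := by
    have himage : Tendsto (fun k : ℕ => f (f^[k] (f w))) atTop (𝓝 (f z)) :=
      (hf z hzS).tendsto.comp (tendsto_nhdsWithin_iff.2 ⟨hz, Eventually.of_forall horbit⟩)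
    have hshift := (tendsto_add_atTop_iff_nat 1).2 hz
    simp only [Function.iterate_succ_apply'] at hshift
    exact tendsto_nhds_unique himage hshift
  have hzT : z ∈ T := hfix ▸ hST hzS
  have hlim : ∀ x ∈ S, Tendsto (fun k : ℕ => f^[k] x) atTop (𝓝 z) := fun x hx =>
    (tendsto_add_atTop_iff_nat 1).1
      (tendsto_iterate_of_dominated hTT hρ hρ1 hdist hcontr (hST hx) hzT hfix)
  refine ⟨z, hzT, hfix, fun y hy hyfix => ?_, hlim⟩
  simpa only [Function.iterate_fixed hyfix, tendsto_const_nhds_iff] using hlim y hy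

end DominatedContraction

lemma pi_pos_of_forall_pos {ι R : Type*} [Preorder R] [Zero R] {v : ι → R} (hv : ∀ i, 0 < v i)
    (i : ι) : 0 < v :=
  have : Nonempty ι := ⟨i⟩
  lt_of_strongLT hv

lemma dotProduct_pos_of_pos {ι R : Type*} [Fintype ι] [Semiring R] [PartialOrder R]
    [IsStrictOrderedRing R] {u v : ι → R} (hu : 0 < u) (hv : ∀ i, 0 < v i) : 0 < u ⬝ᵥ v := by
  obtain ⟨hu0, i, hi⟩ := Pi.lt_def.1 hu
  exact Finset.sum_pos' (fun k _ => mul_nonneg (hu0 k) (hv k).le)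
    ⟨i, Finset.mem_univ i, mul_pos hi (hv i)⟩

lemma sub_le_log_sub_log {a b : ℝ} (ha : 0 < a) (ha1 : a ≤ 1) (hb : 0 < b) (hba : b ≤ a) :
    a - b ≤ Real.log a - Real.log b := by
  calc a - b ≤ (a - b) / a := le_div_self (sub_nonneg.2 hba) ha ha1
    _ = 1 - b / a := by rw [sub_div, div_self ha.ne']
    _ ≤ -Real.log (b / a) := by linarith [Real.log_le_sub_one_of_pos (div_pos hb ha)]
    _ = Real.log a - Real.log b := by rw [Real.log_div hb.ne' ha.ne', neg_sub]

section HilbertMetric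

variable {m n : ℕ} {x y u v : Fin n → ℝ} {D : ℝ}

lemma dH_nonneg (x y : Fin n → ℝ) : 0 ≤ dH x y :=
  Real.iSup_nonneg fun i => Real.iSup_nonneg' ⟨i, by rw [mul_comm (y i), Real.log_div_self]⟩

lemma dH_smul_self (c : ℝ) (x : Fin n → ℝ) : dH (c • x) x = 0 := by
  have h (i j : Fin n) : (c • x) i * x j = x i * (c • x) j := by
    simp only [Pi.smul_apply, smul_eq_mul]
    ring
  simp only [dH, h, Real.log_div_self, Real.iSup_const_zero]

lemma dH_inv_inv (x y : Fin n → ℝ) : dH x⁻¹ y⁻¹ = dH y x := by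
  simp only [dH, Pi.inv_apply, ← mul_inv, inv_div_inv]

lemma dH_le_iff (hD : 0 ≤ D) :
    dH x y ≤ D ↔ ∀ i j, Real.log ((x i * y j) / (y i * x j)) ≤ D := by
  refine ⟨fun h i j => le_trans ?_ h,
    fun h => Real.iSup_le (fun i => Real.iSup_le (h i) hD) hD⟩
  exact le_ciSup_of_le (finite_range _).bddAbove i
    (le_ciSup (f := fun j => Real.log ((x i * y j) / (y i * x j))) (finite_range _).bddAbove j)

lemma dH_le_iff_log (hx : ∀ i, 0 < x i) (hy : ∀ i, 0 < y i) (hD : 0 ≤ D) :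
    dH x y ≤ D ↔
      ∀ i j, (Real.log (x i) - Real.log (y i)) - (Real.log (x j) - Real.log (y j)) ≤ D := by
  rw [dH_le_iff hD]
  refine forall₂_congr fun i j => ?_
  rw [Real.log_div (mul_pos (hx i) (hy j)).ne' (mul_pos (hy i) (hx j)).ne',
    Real.log_mul (hx i).ne' (hy j).ne', Real.log_mul (hy i).ne' (hx j).ne', sub_sub_sub_eq,
    add_comm (Real.log (y i))]

lemma dH_le_iff_mul (hx : ∀ i, 0 < x i) (hy : ∀ i, 0 < y i) (hD : 0 ≤ D) :
    dH x y ≤ D ↔ ∀ i j, x i * y j ≤ Real.exp D * (y i * x j) := by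
  rw [dH_le_iff hD]
  refine forall₂_congr fun i j => ?_
  have hyx : 0 < y i * x j := mul_pos (hy i) (hx j)
  rw [Real.log_le_iff_le_exp (div_pos (mul_pos (hx i) (hy j)) hyx), div_le_iff₀ hyx]

lemma log_sub_log_sub_le_dH (hx : ∀ i, 0 < x i) (hy : ∀ i, 0 < y i) (i j : Fin n) :
    (Real.log (x i) - Real.log (y i)) - (Real.log (x j) - Real.log (y j)) ≤ dH x y :=
  (dH_le_iff_log hx hy (dH_nonneg x y)).1 le_rfl i j

lemma mul_le_exp_dH_mul (hx : ∀ i, 0 < x i) (hy : ∀ i, 0 < y i) (i j : Fin n) :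
    x i * y j ≤ Real.exp (dH x y) * (y i * x j) :=
  (dH_le_iff_mul hx hy (dH_nonneg x y)).1 le_rfl i j

lemma dH_comm (hx : ∀ i, 0 < x i) (hy : ∀ i, 0 < y i) : dH x y = dH y x := by
  have hle {x y : Fin n → ℝ} (hx : ∀ i, 0 < x i) (hy : ∀ i, 0 < y i) : dH x y ≤ dH y x :=
    (dH_le_iff_log hx hy (dH_nonneg y x)).2 fun i j => by
      linarith [log_sub_log_sub_le_dH hy hx j i]
  exact (hle hx hy).antisymm (hle hy hx)

lemma exists_eq_smul_of_dH_eq_zero (hx : ∀ i, 0 < x i) (hy : ∀ i, 0 < y i) (h : dH x y = 0) :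
    ∃ c : ℝ, x = c • y := by
  have hmul (i j : Fin n) : x i * y j ≤ y i * x j := by
    simpa only [h, Real.exp_zero, one_mul] using mul_le_exp_dH_mul hx hy i j
  rcases isEmpty_or_nonempty (Fin n) with _ | ⟨⟨k⟩⟩
  · exact ⟨0, Subsingleton.elim _ _⟩
  · refine ⟨x k / y k, funext fun i => ?_⟩
    rw [Pi.smul_apply, smul_eq_mul, div_mul_eq_mul_div, eq_div_iff (hy k).ne']
    linarith [hmul i k, hmul k i]

lemma dH_mul_mul_le (hx : ∀ i, 0 < x i) (hy : ∀ i, 0 < y i) (hu : ∀ i, 0 < u i)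
    (hv : ∀ i, 0 < v i) : dH (x * u) (y * v) ≤ dH x y + dH u v := by
  refine (dH_le_iff_log (fun i => mul_pos (hx i) (hu i)) (fun i => mul_pos (hy i) (hv i))
    (add_nonneg (dH_nonneg x y) (dH_nonneg u v))).2 fun i j => ?_
  simp only [Real.log_mul (hx _).ne' (hu _).ne', Real.log_mul (hy _).ne' (hv _).ne']
  linarith [log_sub_log_sub_le_dH hx hy i j, log_sub_log_sub_le_dH hu hv i j]

lemma dH_div_div_le (hx : ∀ i, 0 < x i) (hy : ∀ i, 0 < y i) (hu : ∀ i, 0 < u i)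
    (hv : ∀ i, 0 < v i) : dH (x / u) (y / v) ≤ dH x y + dH u v := by
  rw [div_eq_mul_inv, div_eq_mul_inv, dH_comm hu hv, ← dH_inv_inv u v]
  exact dH_mul_mul_le hx hy (fun i => inv_pos.2 (hu i)) fun i => inv_pos.2 (hv i)

lemma dH_mulVec_le {A : Matrix (Fin m) (Fin n) ℝ} (hA : ∀ i, 0 < A i) (hx : ∀ i, 0 < x i)
    (hy : ∀ i, 0 < y i) : dH (A *ᵥ x) (A *ᵥ y) ≤ dH x y := by
  refine (dH_le_iff_mul (fun i => dotProduct_pos_of_pos (hA i) hx)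
    (fun i => dotProduct_pos_of_pos (hA i) hy) (dH_nonneg x y)).2 fun i j => ?_
  simp only [dotProduct]
  rw [Finset.sum_mul_sum, Finset.sum_mul_sum]
  simp only [Finset.mul_sum]
  refine Finset.sum_le_sum fun k _ => Finset.sum_le_sum fun l _ => ?_
  calc A i k * x k * (A j l * y l) = A i k * A j l * (x k * y l) := by ring
    _ ≤ A i k * A j l * (Real.exp (dH x y) * (y k * x l)) :=
        mul_le_mul_of_nonneg_left (mul_le_exp_dH_mul hx hy k l)
          (mul_nonneg ((hA i).le k) ((hA j).le l))
    _ = Real.exp (dH x y) * (A i k * y k * (A j l * x l)) := by ring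

lemma nonneg_of_mem_birkhoffRatios {A : Matrix (Fin n) (Fin n) ℝ} {r : ℝ}
    (hr : r ∈ birkhoffRatios A) : 0 ≤ r := by
  obtain ⟨x, y, -, -, -, rfl⟩ := hr
  exact div_nonneg (dH_nonneg _ _) (dH_nonneg _ _)

lemma nonneg_of_isLUB_birkhoffRatios {A : Matrix (Fin n) (Fin n) ℝ} {τ : ℝ}
    (hτ : IsLUB (birkhoffRatios A) τ) : 0 ≤ τ := by
  obtain ⟨r, hr⟩ := hτ.nonempty
  exact (nonneg_of_mem_birkhoffRatios hr).trans (hτ.1 hr)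

lemma dH_vecMul_le {A : Matrix (Fin n) (Fin n) ℝ} {τ : ℝ}
    (hτ : τ ∈ upperBounds (birkhoffRatios A)) (hx : ∀ i, 0 < x i) (hy : ∀ i, 0 < y i) :
    dH (x ᵥ* A) (y ᵥ* A) ≤ τ * dH x y := by
  by_cases hprop : ∃ c : ℝ, x = c • y
  · obtain ⟨c, rfl⟩ := hprop
    rw [smul_vecMul, dH_smul_self, dH_smul_self, mul_zero]
  · have hpos : 0 < dH x y :=
      (dH_nonneg x y).lt_of_ne' fun h => hprop (exists_eq_smul_of_dH_eq_zero hx hy h)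
    exact (div_le_iff₀ hpos).1 (hτ ⟨x, y, hx, hy, not_exists.1 hprop, rfl⟩)

end HilbertMetric

/-- The relative interior of the standard simplex, on which `dH` is a distance. -/
def openSimplex (ι : Type*) [Fintype ι] : Set (ι → ℝ) := {x ∈ stdSimplex ℝ ι | ∀ i, 0 < x i}

section Simplex

variable {ι : Type*} [Fintype ι] {n : ℕ}

lemma pos_of_mem_stdSimplex {x : ι → ℝ} (hx : x ∈ stdSimplex ℝ ι) : 0 < x := by
  refine lt_of_le_of_ne' hx.1 ?_
  rintro rfl
  simpa using hx.2

lemma exists_posPart_sub_le_log_sub_log {x y : ι → ℝ} (hx : x ∈ openSimplex ι)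
    (hy : y ∈ openSimplex ι) (i : ι) : ∃ k, (x i - y i)⁺ ≤ Real.log (x k) - Real.log (y k) := by
  rcases le_total (x i) (y i) with hxy | hyx
  · obtain ⟨k, -, hk⟩ : ∃ k ∈ Finset.univ, y k ≤ x k :=
      Finset.exists_le_of_sum_le ⟨i, Finset.mem_univ i⟩ (hy.1.2.trans hx.1.2.symm).le
    refine ⟨k, ?_⟩
    rw [posPart_of_nonpos (sub_nonpos.2 hxy)]
    exact sub_nonneg.2 (Real.log_le_log (hy.2 k) hk)
  · refine ⟨i, ?_⟩
    rw [posPart_of_nonneg (sub_nonneg.2 hyx)]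
    exact sub_le_log_sub_log (hx.2 i) (mem_Icc_of_mem_stdSimplex hx.1 i).2 (hy.2 i) hyx

lemma posPart_sub_add_posPart_sub_le_dH {x y : Fin n → ℝ} (hx : x ∈ openSimplex (Fin n))
    (hy : y ∈ openSimplex (Fin n)) (i j : Fin n) :
    (x i - y i)⁺ + (y j - x j)⁺ ≤ dH x y := by
  obtain ⟨k, hk⟩ := exists_posPart_sub_le_log_sub_log hx hy i
  obtain ⟨l, hl⟩ := exists_posPart_sub_le_log_sub_log hy hx j
  linarith [log_sub_log_sub_le_dH hx.2 hy.2 k l]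

lemma dist_le_dH {x y : Fin n → ℝ} (hx : x ∈ openSimplex (Fin n)) (hy : y ∈ openSimplex (Fin n)) :
    dist x y ≤ dH x y := by
  refine (dist_pi_le_iff (dH_nonneg x y)).2 fun i => ?_
  rw [Real.dist_eq, ← posPart_add_negPart, ← posPart_neg, neg_sub]
  exact posPart_sub_add_posPart_sub_le_dH hx hy i i

end Simplex

/-- A positive nondecreasing weight on `[0,1]` whose logarithm is Lipschitz with constant `L`. For
a differentiable `g` the last condition says `L⁺(g) ≤ L`. -/
structure IsLogLipschitzWeight (g : ℝ → ℝ) (L : ℝ≥0) : Prop where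
  pos : ∀ t ∈ Icc (0 : ℝ) 1, 0 < g t
  monotoneOn : MonotoneOn g (Icc 0 1)
  lipschitzOnWith_log : LipschitzOnWith L (fun t => Real.log (g t)) (Icc 0 1)

namespace IsLogLipschitzWeight

variable {g : ℝ → ℝ} {L : ℝ≥0} {n : ℕ}

lemma continuousOn (hg : IsLogLipschitzWeight g L) : ContinuousOn g (Icc 0 1) :=
  hg.lipschitzOnWith_log.continuousOn.rexp.congr fun t ht => (Real.exp_log (hg.pos t ht)).symm

lemma comp_pos (hg : IsLogLipschitzWeight g L) {ι : Type*} [Fintype ι] {x : ι → ℝ}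
    (hx : x ∈ stdSimplex ℝ ι) (i : ι) : 0 < (g ∘ x) i :=
  hg.pos _ (mem_Icc_of_mem_stdSimplex hx i)

lemma log_sub_log_le (hg : IsLogLipschitzWeight g L) {s t : ℝ} (hs : s ∈ Icc (0 : ℝ) 1)
    (ht : t ∈ Icc (0 : ℝ) 1) : Real.log (g s) - Real.log (g t) ≤ L * (s - t)⁺ := by
  rcases le_total s t with hst | hts
  · rw [posPart_of_nonpos (sub_nonpos.2 hst), mul_zero]
    exact sub_nonpos.2 (Real.log_le_log (hg.pos s hs) (hg.monotoneOn hs ht hst))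
  · rw [posPart_of_nonneg (sub_nonneg.2 hts), sub_le_iff_le_add']
    simpa only [Real.dist_eq, abs_of_nonneg (sub_nonneg.2 hts)] using
      hg.lipschitzOnWith_log.le_add_mul hs ht

lemma dH_comp_le (hg : IsLogLipschitzWeight g L) {x y : Fin n → ℝ} (hx : x ∈ openSimplex (Fin n))
    (hy : y ∈ openSimplex (Fin n)) : dH (g ∘ x) (g ∘ y) ≤ L * dH x y := by
  refine (dH_le_iff_log (hg.comp_pos hx.1) (hg.comp_pos hy.1)
    (mul_nonneg L.2 (dH_nonneg x y))).2 fun i j => ?_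
  have hx01 := mem_Icc_of_mem_stdSimplex hx.1
  have hy01 := mem_Icc_of_mem_stdSimplex hy.1
  calc (Real.log (g (x i)) - Real.log (g (y i))) - (Real.log (g (x j)) - Real.log (g (y j)))
      ≤ L * (x i - y i)⁺ + L * (y j - x j)⁺ := by
        linarith [hg.log_sub_log_le (hx01 i) (hy01 i), hg.log_sub_log_le (hy01 j) (hx01 j)]
    _ = L * ((x i - y i)⁺ + (y j - x j)⁺) := (mul_add _ _ _).symm
    _ ≤ L * dH x y := mul_le_mul_of_nonneg_left (posPart_sub_add_posPart_sub_le_dH hx hy i j) L.2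

end IsLogLipschitzWeight

namespace IsAdmissible

variable {g g' : ℝ → ℝ}

lemma nonneg_of_mem_ratioSet (hg : IsAdmissible g g') {r : ℝ} (hr : r ∈ ratioSet g g') :
    0 ≤ r := by
  obtain ⟨-, -, -, hpos, hpos'⟩ := hg
  obtain ⟨t, ht, rfl⟩ := hr
  exact div_nonneg (hpos' t ht).le (hpos t ht).le

lemma monotoneOn (hg : IsAdmissible g g') : MonotoneOn g (Icc 0 1) := by
  obtain ⟨hderiv, -, -, -, hpos'⟩ := hg
  exact monotoneOn_of_hasDerivWithinAt_nonneg (convex_Icc 0 1)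
    (fun t ht => (hderiv t ht).continuousWithinAt)
    (fun t ht => (hderiv t (interior_subset ht)).mono interior_subset)
    (fun t ht => (hpos' t (interior_subset ht)).le)

lemma isLogLipschitzWeight (hg : IsAdmissible g g') {L : ℝ≥0}
    (hL : (L : ℝ) ∈ upperBounds (ratioSet g g')) : IsLogLipschitzWeight g L where
  pos := hg.2.2.2.1
  monotoneOn := hg.monotoneOn
  lipschitzOnWith_log := by
    refine (convex_Icc 0 1).lipschitzOnWith_of_nnnorm_hasDerivWithin_le
      (fun t ht => (hg.1 t ht).log (hg.2.2.2.1 t ht).ne') fun t ht => ?_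
    have hratio : g' t / g t ∈ ratioSet g g' := ⟨t, ht, rfl⟩
    rw [← NNReal.coe_le_coe, coe_nnnorm, Real.norm_of_nonneg (hg.nonneg_of_mem_ratioSet hratio)]
    exact hL hratio

end IsAdmissible

section WeightedMap

variable {n : ℕ} {C : Matrix (Fin n) (Fin n) ℝ} {g : ℝ → ℝ} {L : ℝ≥0} {x y : Fin n → ℝ}

lemma Mg_pos (hC : ∀ i j, 0 < C i j) (hgx : ∀ i, 0 < (g ∘ x) i) (i j : Fin n) :
    0 < Mg C g x i j :=
  div_pos (mul_pos (hC i j) (hgx j))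
    (Finset.sum_pos (fun k _ => mul_pos (hC i k) (hgx k)) ⟨j, Finset.mem_univ j⟩)

lemma Mg_mem_rowStochastic (hC : ∀ i, 0 < C i) (hgx : ∀ i, 0 < (g ∘ x) i) :
    Mg C g x ∈ rowStochastic ℝ (Fin n) := by
  have hrow (i : Fin n) : 0 < ∑ k, C i k * g (x k) := dotProduct_pos_of_pos (hC i) hgx
  refine mem_rowStochastic_iff_sum.2 ⟨fun i j => ?_, fun i => ?_⟩
  · exact div_nonneg (mul_nonneg ((hC i).le j) (hgx j).le) (hrow i).le
  · simp only [Mg, of_apply, ← Finset.sum_div]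
    exact div_self (hrow i).ne'

lemma fg_eq_mul_vecMul (C : Matrix (Fin n) (Fin n) ℝ) (g : ℝ → ℝ) (x : Fin n → ℝ) :
    fg C g x = (g ∘ x) * ((x / (C *ᵥ (g ∘ x))) ᵥ* C) := by
  ext j
  simp only [fg, Mg, vecMul, mulVec, dotProduct, of_apply, Pi.mul_apply, Pi.div_apply,
    Function.comp_apply, Finset.mul_sum]
  exact Finset.sum_congr rfl fun i _ => by ring

lemma mapsTo_fg_openSimplex (hC : ∀ i j, 0 < C i j) (hg : IsLogLipschitzWeight g L) :
    MapsTo (fg C g) (stdSimplex ℝ (Fin n)) (openSimplex (Fin n)) := fun x hx => by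
  have hgx := hg.comp_pos hx
  have hM := Mg_mem_rowStochastic (fun i => pi_pos_of_forall_pos (hC i) i) hgx
  have hpos (j : Fin n) : 0 < fg C g x j :=
    dotProduct_pos_of_pos (pos_of_mem_stdSimplex hx) fun i => Mg_pos hC hgx i j
  refine ⟨⟨fun j => (hpos j).le, ?_⟩, hpos⟩
  rw [← dotProduct_one]
  refine vecMul_dotProduct_one_eq_one_rowStochastic hM ?_
  rw [dotProduct_one, hx.2]

lemma continuousOn_fg (hC : ∀ i, 0 < C i) (hg : IsLogLipschitzWeight g L) :
    ContinuousOn (fg C g) (stdSimplex ℝ (Fin n)) := by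
  have hcomp (i : Fin n) : ContinuousOn (fun x : Fin n → ℝ => g (x i)) (stdSimplex ℝ (Fin n)) :=
    hg.continuousOn.comp (continuous_apply i).continuousOn
      fun x hx => mem_Icc_of_mem_stdSimplex hx i
  refine continuousOn_pi.2 fun j => ?_
  simp only [fg, Mg, vecMul, dotProduct, of_apply]
  refine continuousOn_finsetSum _ fun i _ => ?_
  refine (continuous_apply i).continuousOn.mul ((continuousOn_const.mul (hcomp j)).div
    (continuousOn_finsetSum _ fun k _ => continuousOn_const.mul (hcomp k)) fun x hx => ?_)
  exact (dotProduct_pos_of_pos (hC i) (hg.comp_pos hx)).ne'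

lemma dH_fg_le (hC : ∀ i j, 0 < C i j) (hg : IsLogLipschitzWeight g L) {τ : ℝ} (hτ0 : 0 ≤ τ)
    (hτ : τ ∈ upperBounds (birkhoffRatios C)) (hx : x ∈ openSimplex (Fin n))
    (hy : y ∈ openSimplex (Fin n)) :
    dH (fg C g x) (fg C g y) ≤ (L + τ * (1 + L)) * dH x y := by
  have hgx := hg.comp_pos hx.1
  have hgy := hg.comp_pos hy.1
  have hrow (i : Fin n) : 0 < C i := pi_pos_of_forall_pos (hC i) i
  have hCx (i : Fin n) : 0 < (C *ᵥ (g ∘ x)) i := dotProduct_pos_of_pos (hrow i) hgx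
  have hCy (i : Fin n) : 0 < (C *ᵥ (g ∘ y)) i := dotProduct_pos_of_pos (hrow i) hgy
  rw [fg_eq_mul_vecMul, fg_eq_mul_vecMul]
  set u := x / (C *ᵥ (g ∘ x))
  set v := y / (C *ᵥ (g ∘ y))
  have hu (i : Fin n) : 0 < u i := div_pos (hx.2 i) (hCx i)
  have hv (i : Fin n) : 0 < v i := div_pos (hy.2 i) (hCy i)
  have huC (j : Fin n) : 0 < (u ᵥ* C) j :=
    dotProduct_pos_of_pos (pi_pos_of_forall_pos hu j) fun i => hC i j
  have hvC (j : Fin n) : 0 < (v ᵥ* C) j :=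
    dotProduct_pos_of_pos (pi_pos_of_forall_pos hv j) fun i => hC i j
  have hgxy : dH (g ∘ x) (g ∘ y) ≤ L * dH x y := hg.dH_comp_le hx hy
  have huv : dH u v ≤ dH x y + L * dH x y :=
    calc dH u v ≤ dH x y + dH (C *ᵥ (g ∘ x)) (C *ᵥ (g ∘ y)) := dH_div_div_le hx.2 hy.2 hCx hCy
      _ ≤ dH x y + L * dH x y := by gcongr; exact (dH_mulVec_le hrow hgx hgy).trans hgxy
  calc dH ((g ∘ x) * (u ᵥ* C)) ((g ∘ y) * (v ᵥ* C))
      ≤ dH (g ∘ x) (g ∘ y) + dH (u ᵥ* C) (v ᵥ* C) := dH_mul_mul_le hgx hgy huC hvC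
    _ ≤ L * dH x y + τ * dH u v := add_le_add hgxy (dH_vecMul_le hτ hu hv)
    _ ≤ L * dH x y + τ * (dH x y + L * dH x y) := by gcongr
    _ = (L + τ * (1 + L)) * dH x y := by ring

end WeightedMap

theorem fg_contraction_unique_fixed_point_general
    {n : ℕ} [NeZero n] {C : Matrix (Fin n) (Fin n) ℝ} (hC : ∀ i j, 0 < C i j)
    {g : ℝ → ℝ} {L : ℝ≥0} (hg : IsLogLipschitzWeight g L)
    {τ : ℝ} (hτ0 : 0 ≤ τ) (hτ : τ ∈ upperBounds (birkhoffRatios C))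
    (hsmall : L + τ * (1 + L) < 1) :
    ∃ xs ∈ openSimplex (Fin n), fg C g xs = xs ∧
      (∀ y ∈ stdSimplex ℝ (Fin n), fg C g y = y → y = xs) ∧
      ∀ x ∈ stdSimplex ℝ (Fin n), Tendsto (fun s : ℕ => (fg C g)^[s] x) atTop (𝓝 xs) :=
  exists_attracting_fixedPoint_of_dominated (isClosed_stdSimplex ℝ (Fin n)).isComplete
    ⟨_, single_mem_stdSimplex ℝ 0⟩ (continuousOn_fg (fun i => pi_pos_of_forall_pos (hC i) i) hg)
    (mapsTo_fg_openSimplex hC hg) (fun _ hx => hx.1) (by positivity) hsmall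
    (fun _ hx _ hy => dist_le_dH hx hy) (fun _ hx _ hy => dH_fg_le hC hg hτ0 hτ hx hy)

theorem fg_contraction_unique_fixed_point
    (n : ℕ) (hn : 0 < n) (C : Matrix (Fin n) (Fin n) ℝ)
    (hCpos : ∀ i j, 0 < C i j)
    (g g' : ℝ → ℝ) (hg : IsAdmissible g g')
    (Lp : ℝ) (hLp : IsGreatest (ratioSet g g') Lp)
    (τ : ℝ) (hτ : IsLUB (birkhoffRatios C) τ)
    (hsmall : 2 * Lp < 1 - τ) :
    ∃ xs ∈ stdSimplex ℝ (Fin n), (∀ i, 0 < xs i) ∧ fg C g xs = xs ∧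
      (∀ y ∈ stdSimplex ℝ (Fin n), (∀ i, 0 < y i) → fg C g y = y → y = xs) ∧
      ∀ x ∈ stdSimplex ℝ (Fin n), (∀ i, 0 < x i) →
        Tendsto (fun s : ℕ => (fg C g)^[s] x) atTop (𝓝 xs) := by
  have : NeZero n := ⟨hn.ne'⟩
  lift Lp to ℝ≥0 using hg.nonneg_of_mem_ratioSet hLp.1
  have hτ0 := nonneg_of_isLUB_birkhoffRatios hτ
  obtain ⟨xs, hxs, hfix, huniq, hlim⟩ := fg_contraction_unique_fixed_point_general hCpos
    (hg.isLogLipschitzWeight hLp.2) hτ0 hτ.1 (by nlinarith [Lp.2])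
  exact ⟨xs, hxs.1, hxs.2, hfix, fun y hy _ => huniq y hy, fun x hx _ => hlim x hx⟩
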